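/- arXiv:1708.07209 — 2 statements merged into one kernel-verified Lean document; each statement's English description precedes it below -/
import Mathlib

section
/- Let A be a core synchronous transducer on X_n, synchronizing at level k, invertible, with every state a homeomorphism state, and let r ≥ k. If the graph of bad pairs G_r(A) contains a circuit, then there exists a rational element z ∈ X_n^ℤ whose forward orbit {f_A^m(z) : m ∈ ℕ} under f_A is infinite. -/
/-! The picture behind the proof is the space-time diagram of `f = zmap`: at time `j` and position
`i` sits the state `stAt (f^[j] z) i` which `f^[j] z` forces at `i`.

Because `k ≤ r`, an edge of the graph of bad pairs says the following about a word `Γ` which stands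
at position `i` of `z`: the states at position `i + r` during the times `0, …, l - 1` do not depend
on anything, while the state at time `l` is `t'` if the state at position `i`, time `0` was `t`, and
`p'` if that state was `p`. We call this a *tile* from `(t, p)` to `(t', p')`. Tiles can be
composed (`Tile.trans`): the word of the second tile is pulled back through the states on the right
edge of the first. So a circuit gives a single tile `(w, σ)` from some `(t, p)` with `t ≠ p` to
itself, after going round twice if one turn exchanges the two states.

There is a right-infinite sequence `W` with prefix `w` which `σ` maps onto itself after
deleting this prefix. It is computed by a machine with finitely many configurations, so it is
eventually periodic (`exists_selfsimilar`). If `z` agrees with `W` from position `i` on and has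
state `t` there, then `f^[l] z` has the same property at position `i + |w|`.

Let `z`, `y` be rational with right half `W` and states `t`, `p` at position `0`. If the orbits
of both are finite, the run of the transducer along `W` from `t` is purely periodic, and so is the
one from `p`. By synchronization the two runs agree from time `k` on, hence everywhere, so `t = p`,
a contradiction. -/

/-- A synchronous transducer with alphabet `X` and state set `Q`:
`step x q` is the state reached after reading letter `x` at state `q`, and
`out x q` is the letter written. -/
structure Transducer (X : Type*) (Q : Type*) where
  step : X → Q → Q
  out : X → Q → X

namespace Transducer

variable {X Q R : Type*}

/-- The transition function extended to words (read left to right). -/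
def stepW (T : Transducer X Q) : List X → Q → Q
  | [], q => q
  | x :: w, q => T.stepW w (T.step x q)

/-- The output function extended to words. -/
def outW (T : Transducer X Q) : List X → Q → List X
  | [], _ => []
  | x :: w, q => T.out x q :: T.outW w (T.step x q)

theorem stepW_append (T : Transducer X Q) (u v : List X) (q : Q) :
    T.stepW (u ++ v) q = T.stepW v (T.stepW u q) := by
  induction u generalizing q with
  | nil => rfl
  | cons x u ih => simpa [stepW] using ih (T.step x q)

/-- `T` is synchronizing at level `k`: the state reached after reading any word of
length `k` is independent of the starting state. -/
def Synchronizing (T : Transducer X Q) (k : ℕ) : Prop :=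
  ∀ Γ : List X, Γ.length = k → ∀ p q : Q, T.stepW Γ p = T.stepW Γ q

/-- A state is in the core of `T` if it is forced by some nonempty word. -/
def InCore (T : Transducer X Q) (q : Q) : Prop :=
  ∃ Γ : List X, Γ ≠ [] ∧ ∀ p : Q, T.stepW Γ p = q

/-- `T` is core if every state is forced. -/
def IsCore (T : Transducer X Q) : Prop := ∀ q : Q, T.InCore q

/-- The map on one-sided infinite sequences induced by the state `q`. -/
def stateMap (T : Transducer X Q) (q : Q) (x : ℕ → X) : ℕ → X :=
  fun i => T.out (x i) (T.stepW ((List.range i).map x) q)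

/-- Every state of `T` is a homeomorphism state. -/
def AllHomeo (T : Transducer X Q) : Prop := ∀ q : Q, Function.Bijective (T.stateMap q)

/-- `T` is invertible: every state acts as a bijection on single letters. -/
def Invertible (T : Transducer X Q) : Prop :=
  ∀ q : Q, Function.Bijective fun x => T.out x q

/-- The map `f_T` on bi-infinite sequences induced by a transducer synchronizing at
level `k`; the letter at position `i` of the image is obtained by processing `x i`
from the state reached after reading `x (i-k), …, x (i-1)` starting at the basepoint
state `q0` (when `T` is synchronizing at level `k` this is the forced state, and the
map does not depend on the choice of `q0`). -/
def zmap (T : Transducer X Q) (k : ℕ) (q0 : Q) (x : ℤ → X) : ℤ → X :=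
  fun i => T.out (x i) (T.stepW ((List.range k).map fun j => x (i - (k : ℤ) + (j : ℤ))) q0)

/-- The composite map on one-sided sequences represented by a word of states,
applied leftmost letter first. -/
def wordMap (T : Transducer X Q) : List Q → (ℕ → X) → ℕ → X
  | [], x => x
  | q :: w, x => T.wordMap w (T.stateMap q x)

/-- A bi-infinite sequence is rational if it is eventually periodic in both directions. -/
def IsRational (z : ℤ → X) : Prop :=
  ∃ (N p q : ℕ), 0 < p ∧ 0 < q ∧
    (∀ i : ℤ, (N : ℤ) ≤ i → z (i + (p : ℤ)) = z i) ∧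
    (∀ i : ℤ, i ≤ -(N : ℤ) → z (i - (q : ℤ)) = z i)

/-- The inverse transducer of an invertible transducer. -/
noncomputable def invT (T : Transducer X Q) (hX : Nonempty X) : Transducer X Q where
  step := fun y q => T.step (@Function.invFun X X hX (fun x => T.out x q) y) q
  out := fun y q => @Function.invFun X X hX (fun x => T.out x q) y

/-- The product transducer `A*B`. -/
def prodT (T : Transducer X Q) (S : Transducer X R) : Transducer X (Q × R) where
  step := fun x pq => (T.step x pq.1, S.step (T.out x pq.1) pq.2)
  out := fun x pq => S.out (T.out x pq.1) pq.2

/-- The `m`-fold power `A^m`, with state set `Q^m`. -/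
def powT (T : Transducer X Q) : (m : ℕ) → Transducer X (Fin m → Q)
  | 0 => { step := fun _ u => u, out := fun x _ => x }
  | m + 1 =>
    { step := fun x u =>
        Fin.cons (T.step x (u 0)) ((T.powT m).step (T.out x (u 0)) fun i => u i.succ)
      out := fun x u => (T.powT m).out (T.out x (u 0)) fun i => u i.succ }

/-- The restriction of a transducer to its core. -/
def coreT (T : Transducer X Q) : Transducer X {q : Q // T.InCore q} where
  step := fun x q =>
    ⟨T.step x q.1, by
      obtain ⟨Γ, hΓ, h⟩ := q.2
      exact ⟨Γ ++ [x], by simp, fun p => by rw [T.stepW_append, h p]; rfl⟩⟩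
  out := fun x q => T.out x q.1

/-- `Γ_l^P`: the word obtained by passing `Γ` successively through the states in `P`. -/
def iterW (T : Transducer X Q) : List Q → List X → List X
  | [], Γ => Γ
  | p :: P, Γ => T.iterW P (T.outW Γ p)

/-- The list of states `out_i^P` reached when passing `Γ` successively through `P`. -/
def iterOuts (T : Transducer X Q) : List Q → List X → List Q
  | [], _ => []
  | p :: P, Γ => T.stepW Γ p :: T.iterOuts P (T.outW Γ p)

/-- `((t :: Tt), (p :: Tp), Γ)` is a split (forced states computed from the
basepoint state `q0`). -/
def SplitCond (T : Transducer X Q) (q0 : Q) (t p : Q) (Tt Tp : List Q) (Γ : List X) : Prop :=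
  Tt.length = Tp.length ∧
  T.iterOuts (t :: Tt) Γ = T.iterOuts (p :: Tp) Γ ∧
  (∀ i : ℕ, 1 ≤ i → i < (t :: Tt).length →
    T.stepW (T.iterW ((t :: Tt).take i) Γ) q0 = T.stepW (T.iterW ((p :: Tp).take i) Γ) q0) ∧
  T.stepW (T.iterW (t :: Tt) Γ) q0 ≠ T.stepW (T.iterW (p :: Tp) Γ) q0

/-- The bottom of the split `((t :: Tt), (p :: Tp), Γ)` depends only on its top. -/
def DependsOnTop (T : Transducer X Q) (q0 : Q) (t p : Q) (Tt Tp : List Q) (Γ : List X) : Prop :=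
  ∀ U U' : List Q, U.length = Tt.length → U'.length = Tp.length →
    T.iterOuts (t :: U) Γ = T.iterOuts (t :: Tt) Γ ∧
    T.iterOuts (p :: U') Γ = T.iterOuts (p :: Tp) Γ ∧
    T.stepW (T.iterW (t :: U) Γ) q0 = T.stepW (T.iterW (t :: Tt) Γ) q0 ∧
    T.stepW (T.iterW (p :: U') Γ) q0 = T.stepW (T.iterW (p :: Tp) Γ) q0

/-- The edge relation of the graph of bad pairs `G_r(T)` (on unordered pairs of
states, modelled as subsets of `Q`). -/
def BadEdge (T : Transducer X Q) (q0 : Q) (r : ℕ) (v w : Set Q) : Prop :=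
  ∃ (t p : Q) (Tt Tp : List Q) (Γ : List X), Γ.length = r ∧
    T.SplitCond q0 t p Tt Tp Γ ∧ T.DependsOnTop q0 t p Tt Tp Γ ∧
    v = {t, p} ∧
    w = {T.stepW (T.iterW (t :: Tt) Γ) q0, T.stepW (T.iterW (p :: Tp) Γ) q0}

/-- The `r` splitting length of `T`, as an extended natural number (`⊤` if no split
at level `r` exists). -/
noncomputable def splittingLength (T : Transducer X Q) (q0 : Q) (r : ℕ) : ℕ∞ :=
  sInf {L : ℕ∞ | ∃ (t p : Q) (Tt Tp : List Q) (Γ : List X),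
    Γ.length = r ∧ L = ((Tt.length + 1 : ℕ) : ℕ∞) ∧ T.SplitCond q0 t p Tt Tp Γ}

/-- The `i`-th rotation of a word. -/
def rotWord (i : ℕ) (Γ : List X) : List X :=
  Γ.drop (Γ.length - i) ++ Γ.take (Γ.length - i)

/-- A nonempty word is prime if it is not a proper power of a shorter word. -/
def IsPrimeWord (Γ : List X) : Prop :=
  Γ ≠ [] ∧ ∀ (δ : List X) (m : ℕ), 2 ≤ m → Γ ≠ (List.replicate m δ).flatten

/-- The length of the orbit of `Γ` under `f`. -/
noncomputable def orbitLen (f : List X → List X) (Γ : List X) : ℕ :=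
  (Set.range fun m : ℕ => f^[m] Γ).ncard

/-- The minimal `s ≥ 1` such that `f^[s] Γ` is a rotation of `Γ`
(for words of length `k`). -/
noncomputable def sigmaIdx (f : List X → List X) (k : ℕ) (Γ : List X) : ℕ :=
  sInf {s : ℕ | 1 ≤ s ∧ ∃ i < k, f^[s] Γ = rotWord i Γ}

/-- The rotation index attained at the minimal exponent `sigmaIdx`. -/
noncomputable def rhoIdx (f : List X → List X) (k : ℕ) (Γ : List X) : ℕ :=
  sInf {i : ℕ | i < k ∧ f^[sigmaIdx f k Γ] Γ = rotWord i Γ}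

end Transducer

namespace Transducer

variable {X Q : Type*}

/-! ### Processing words through words of states -/

theorem length_outW (T : Transducer X Q) (u : List X) (q : Q) :
    (T.outW u q).length = u.length := by
  induction u generalizing q with
  | nil => rfl
  | cons x u ih => simp [outW, ih]

theorem outW_append (T : Transducer X Q) (u v : List X) (q : Q) :
    T.outW (u ++ v) q = T.outW u q ++ T.outW v (T.stepW u q) := by
  induction u generalizing q with
  | nil => rfl
  | cons x u ih => simp [outW, stepW, ih]

theorem length_iterW (T : Transducer X Q) (P : List Q) (u : List X) :
    (T.iterW P u).length = u.length := by
  induction P generalizing u with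
  | nil => rfl
  | cons p P ih => simp [iterW, ih, length_outW]

theorem length_iterOuts (T : Transducer X Q) (P : List Q) (u : List X) :
    (T.iterOuts P u).length = P.length := by
  induction P generalizing u with
  | nil => rfl
  | cons p P ih => simp [iterOuts, ih]

theorem iterW_nil (T : Transducer X Q) (P : List Q) : T.iterW P [] = [] :=
  List.length_eq_zero_iff.1 (T.length_iterW P [])

theorem iterOuts_nil (T : Transducer X Q) (P : List Q) : T.iterOuts P [] = P := by
  induction P with
  | nil => rfl
  | cons p P ih => simp [iterOuts, stepW, outW, ih]

theorem iterW_append_word (T : Transducer X Q) (P : List Q) (u v : List X) :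
    T.iterW P (u ++ v) = T.iterW P u ++ T.iterW (T.iterOuts P u) v := by
  induction P generalizing u v with
  | nil => rfl
  | cons p P ih => simp [iterW, iterOuts, ih, outW_append]

theorem iterOuts_append_word (T : Transducer X Q) (P : List Q) (u v : List X) :
    T.iterOuts P (u ++ v) = T.iterOuts (T.iterOuts P u) v := by
  induction P generalizing u v with
  | nil => rfl
  | cons p P ih => simp [iterOuts, ih, outW_append, stepW_append]

theorem iterW_append_states (T : Transducer X Q) (P P' : List Q) (u : List X) :
    T.iterW (P ++ P') u = T.iterW P' (T.iterW P u) := by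
  induction P generalizing u with
  | nil => rfl
  | cons p P ih => simp [iterW, ih]

theorem iterOuts_append_states (T : Transducer X Q) (P P' : List Q) (u : List X) :
    T.iterOuts (P ++ P') u = T.iterOuts P u ++ T.iterOuts P' (T.iterW P u) := by
  induction P generalizing u with
  | nil => rfl
  | cons p P ih => simp [iterOuts, iterW, ih]

theorem outW_surj (T : Transducer X Q) (hinv : T.Invertible) (q : Q) (v : List X) :
    ∃ u, T.outW u q = v := by
  induction v generalizing q with
  | nil => exact ⟨[], rfl⟩
  | cons y v ih =>
    obtain ⟨x, hx⟩ := (hinv q).2 y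
    obtain ⟨u, hu⟩ := ih (T.step x q)
    exact ⟨x :: u, by simp only [outW, hu]; rw [← hx]⟩

theorem iterW_surj (T : Transducer X Q) (hinv : T.Invertible) (P : List Q) (v : List X) :
    ∃ u, T.iterW P u = v := by
  induction P with
  | nil => exact ⟨v, rfl⟩
  | cons p P ih =>
    obtain ⟨u, hu⟩ := ih
    obtain ⟨u', hu'⟩ := T.outW_surj hinv p u
    exact ⟨u', by simp [iterW, hu', hu]⟩

theorem Synchronizing.stepW_eq {T : Transducer X Q} {k : ℕ} (h : T.Synchronizing k)
    (u : List X) (hu : k ≤ u.length) (p q : Q) : T.stepW u p = T.stepW u q := by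
  rw [← List.take_append_drop k u, stepW_append, stepW_append,
    h (u.take k) (by simpa using hu) p q]

/-! ### Tiles -/

/-- The word `w`, read at a position where the state at time `0` is `t`, produces behind it the
states `σ` at the times before `σ.length` and forces the state `t'` at time `σ.length`,
whatever the states in front of it at positive times are. -/
def HalfTile (T : Transducer X Q) (q0 : Q) (w : List X) (σ : List Q) (t t' : Q) : Prop :=
  ∀ U : List Q, U.length + 1 = σ.length →
    T.iterOuts (t :: U) w = σ ∧ T.stepW (T.iterW (t :: U) w) q0 = t'

/-- One word and one column of states serving both as a half tile from `a.1` to `b.1` and as one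
from `a.2` to `b.2`. -/
def Tile (T : Transducer X Q) (q0 : Q) (k : ℕ) (a b : Q × Q) : Prop :=
  ∃ (w : List X) (σ : List Q), k ≤ w.length ∧ σ ≠ [] ∧
    T.HalfTile q0 w σ a.1 b.1 ∧ T.HalfTile q0 w σ a.2 b.2

theorem Tile.swap {T : Transducer X Q} {q0 : Q} {k : ℕ} {a b : Q × Q}
    (h : T.Tile q0 k a b) : T.Tile q0 k a.swap b.swap := by
  obtain ⟨w, σ, hw, hσ, h1, h2⟩ := h
  exact ⟨w, σ, hw, hσ, h2, h1⟩

theorem HalfTile.trans {T : Transducer X Q} {q0 : Q} {k : ℕ} (hsync : T.Synchronizing k)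
    {w w' u : List X} {σ σ' : List Q} {t t' t'' : Q} (hw : k ≤ w.length) (hw' : k ≤ w'.length)
    (hσ : σ ≠ []) (hσ' : σ' ≠ []) (h : T.HalfTile q0 w σ t t') (h' : T.HalfTile q0 w' σ' t' t'')
    (hu : T.iterW σ u = w') :
    T.HalfTile q0 (w ++ u) (T.iterOuts σ u ++ σ') t t'' := by
  intro U hU
  have hl := List.length_pos_iff.2 hσ
  have hl' := List.length_pos_iff.2 hσ'
  simp only [List.length_append, length_iterOuts] at hU
  -- `U` splits into the states before and after the time `σ.length`.
  obtain ⟨U₁, s, U₂, rfl, h1⟩ : ∃ U₁ s U₂, U = U₁ ++ s :: U₂ ∧ U₁.length + 1 = σ.length := by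
    have hlt : σ.length - 1 < U.length := by omega
    refine ⟨U.take (σ.length - 1), U[σ.length - 1], U.drop (σ.length - 1 + 1), ?_, ?_⟩
    · rw [← List.drop_eq_getElem_cons hlt, List.take_append_drop]
    · rw [List.length_take]; omega
  have h2 : U₂.length + 1 = σ'.length := by simp at hU; omega
  obtain ⟨ho, hs⟩ := h U₁ h1
  -- The arbitrary state `s` is replaced by `t'` after the image of `w` has been read.
  have key : ∃ V, V.length + 1 = σ'.length ∧
      T.iterOuts (s :: U₂) (T.iterW (t :: U₁) w) = t' :: V := by
    refine ⟨T.iterOuts U₂ (T.outW (T.iterW (t :: U₁) w) s), by rw [length_iterOuts, h2], ?_⟩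
    simp only [iterOuts, List.cons.injEq, and_true]
    rw [← hs]
    exact hsync.stepW_eq _ (by rw [length_iterW]; exact hw) _ _
  obtain ⟨V, hV, hVeq⟩ := key
  obtain ⟨ho', hs'⟩ := h' V hV
  have e : t :: (U₁ ++ s :: U₂) = (t :: U₁) ++ (s :: U₂) := rfl
  rw [e, iterOuts_append_states, iterW_append_states, iterOuts_append_word, iterW_append_word,
    ho, hu, iterOuts_append_word, iterW_append_word, hVeq, ho', stepW_append]
  refine ⟨rfl, ?_⟩
  rw [← hs']
  exact hsync.stepW_eq _ (by rw [length_iterW]; exact hw') _ _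

theorem Tile.trans {T : Transducer X Q} {q0 : Q} {k : ℕ} (hsync : T.Synchronizing k)
    (hinv : T.Invertible) {a b c : Q × Q} (h : T.Tile q0 k a b) (h' : T.Tile q0 k b c) :
    T.Tile q0 k a c := by
  obtain ⟨w, σ, hw, hσ, h1, h2⟩ := h
  obtain ⟨w', σ', hw', hσ', h1', h2'⟩ := h'
  obtain ⟨u, hu⟩ := T.iterW_surj hinv σ w'
  exact ⟨w ++ u, T.iterOuts σ u ++ σ', by simp; omega, by simp [hσ'],
    h1.trans hsync hw hw' hσ hσ' h1' hu, h2.trans hsync hw hw' hσ hσ' h2' hu⟩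

theorem BadEdge.tile {T : Transducer X Q} {q0 : Q} {k r : ℕ} (hkr : k ≤ r) {v w : Set Q}
    (h : T.BadEdge q0 r v w) :
    ∃ a b : Q × Q, v = {a.1, a.2} ∧ w = {b.1, b.2} ∧ b.1 ≠ b.2 ∧ T.Tile q0 k a b := by
  obtain ⟨t, p, Tt, Tp, Γ, hΓ, ⟨hlen, hout, -, hne⟩, hdep, rfl, rfl⟩ := h
  refine ⟨(t, p), (_, _), rfl, rfl, hne, Γ, T.iterOuts (t :: Tt) Γ, by omega, by simp [iterOuts],
    fun U hU => ?_, fun U hU => ?_⟩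
  · rw [length_iterOuts, List.length_cons, Nat.add_right_cancel_iff] at hU
    obtain ⟨h1, -, h3, -⟩ := hdep U Tp hU rfl
    exact ⟨h1, h3⟩
  · rw [length_iterOuts, List.length_cons, Nat.add_right_cancel_iff] at hU
    obtain ⟨-, h2, -, h4⟩ := hdep Tt U rfl (by omega)
    exact ⟨h2.trans hout.symm, h4⟩

theorem pair_eq_or_swap {a b : Q × Q} (h : ({a.1, a.2} : Set Q) = {b.1, b.2}) :
    a = b ∨ a = b.swap := by
  obtain ⟨x, y⟩ := a
  obtain ⟨z, w⟩ := b
  simpa [Set.pair_eq_pair_iff] using h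

theorem tile_of_transGen {T : Transducer X Q} {q0 : Q} {k r : ℕ} (hkr : k ≤ r)
    (hsync : T.Synchronizing k) (hinv : T.Invertible) {v w : Set Q}
    (h : Relation.TransGen (T.BadEdge q0 r) v w) :
    ∃ a b : Q × Q, v = {a.1, a.2} ∧ w = {b.1, b.2} ∧ b.1 ≠ b.2 ∧ T.Tile q0 k a b := by
  induction h with
  | single h => exact h.tile hkr
  | tail _ h ih =>
    obtain ⟨a, b, ha, hb, -, hab⟩ := ih
    obtain ⟨b', c, hb', hc, hne, hbc⟩ := h.tile hkr
    rcases pair_eq_or_swap (hb.symm.trans hb') with rfl | rfl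
    · exact ⟨a, c, ha, hc, hne, hab.trans hsync hinv hbc⟩
    · exact ⟨a, c.swap, ha, by rw [hc]; exact Set.pair_comm _ _, hne.symm,
        hab.trans hsync hinv hbc.swap⟩

theorem exists_closed_tile {T : Transducer X Q} {q0 : Q} {k r : ℕ} (hkr : k ≤ r)
    (hsync : T.Synchronizing k) (hinv : T.Invertible) {v : Set Q}
    (h : Relation.TransGen (T.BadEdge q0 r) v v) :
    ∃ a : Q × Q, a.1 ≠ a.2 ∧ T.Tile q0 k a a := by
  obtain ⟨a, b, ha, hb, hne, hab⟩ := tile_of_transGen hkr hsync hinv h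
  rcases pair_eq_or_swap (ha.symm.trans hb) with rfl | rfl
  · exact ⟨a, hne, hab⟩
  · exact ⟨b, hne, by simpa using hab.swap.trans hsync hinv hab⟩

/-! ### The self-similar right half -/

/-- For a nonempty word `w` and a column of states `σ` there is an eventually periodic sequence
`W` with prefix `w` such that `σ` maps `W` with this prefix deleted onto `W`. -/
theorem exists_selfsimilar [Finite X] [Finite Q] (T : Transducer X Q) (hinv : T.Invertible)
    (w : List X) (σ : List Q) (hw : w ≠ []) :
    ∃ W : ℕ → X, (List.range w.length).map W = w ∧
      (∀ n, T.iterW σ ((List.range n).map fun j => W (w.length + j)) = (List.range n).map W) ∧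
      ∃ N P : ℕ, 0 < P ∧ ∀ n, N ≤ n → W (n + P) = W n := by
  obtain ⟨a, w', rfl⟩ := List.exists_cons_of_ne_nil hw
  -- `pre τ y` is the letter which the column `τ` turns into `y`.
  have hpre : ∀ (τ : List Q) (y : X), ∃ x, T.iterW τ [x] = [y] := by
    intro τ y
    obtain ⟨u, hu⟩ := T.iterW_surj hinv τ [y]
    have hl := T.length_iterW τ u
    rw [hu] at hl
    obtain ⟨x, rfl⟩ := List.length_eq_one_iff.1 hl.symm
    exact ⟨x, hu⟩
  choose pre hpre using hpre
  -- A configuration holds the next `|w|` letters (as the first letter and the others) and the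
  -- column of states behind these letters.
  let next : (X × List X) × List Q → (X × List X) × List Q := fun c =>
    (((c.1.2 ++ [pre c.2 c.1.1]).headD a, (c.1.2 ++ [pre c.2 c.1.1]).tail),
      T.iterOuts c.2 [pre c.2 c.1.1])
  let c : ℕ → (X × List X) × List Q := fun i => next^[i] ((a, w'), σ)
  let buf : ℕ → List X := fun i => (c i).1.1 :: (c i).1.2
  let W : ℕ → X := fun i => (c i).1.1
  have hcs : ∀ i, c (i + 1) = next (c i) := fun i => Function.iterate_succ_apply' next i _
  have hbuf : ∀ i, buf (i + 1) = (c i).1.2 ++ [pre (c i).2 (W i)] := by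
    intro i
    simp only [buf, hcs, next, W]
    cases (c i).1.2 <;> simp
  have hlen : ∀ i, (buf i).length = w'.length + 1 := by
    intro i
    induction i with
    | zero => simp [buf, c]
    | succ i ih => rw [hbuf]; simpa [buf] using ih
  have hcol : ∀ i, (c (i + 1)).2 = T.iterOuts (c i).2 [pre (c i).2 (W i)] := by
    intro i; rw [hcs]
  have hget : ∀ j i, j < w'.length + 1 → (buf i)[j]? = some (W (i + j)) := by
    intro j
    induction j with
    | zero => intro i _; simp [buf, W]
    | succ j ih =>
      intro i hj
      have h1 := ih (i + 1) (by omega)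
      have h2 := hlen i
      simp only [buf, List.length_cons, Nat.add_right_cancel_iff] at h2
      rw [hbuf, List.getElem?_append_left (by omega)] at h1
      rw [show i + (j + 1) = i + 1 + j by ring, ← h1]
      simp [buf]
  have hlast : ∀ i, W (w'.length + 1 + i) = pre (c i).2 (W i) := by
    intro i
    have h1 := hget w'.length (i + 1) (by omega)
    have h2 := hlen i
    simp only [buf, List.length_cons, Nat.add_right_cancel_iff] at h2
    rw [hbuf, ← h2] at h1
    simp only [List.getElem?_concat_length, Option.some.injEq] at h1
    rw [h1, h2]; congr 1; ring
  refine ⟨W, ?_, ?_, ?_⟩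
  · apply List.ext_getElem?
    intro j
    by_cases hj : j < w'.length + 1
    · have := hget j 0 hj
      simp only [buf, c, Function.iterate_zero, id, zero_add] at this
      rw [this]; simp [hj]
    · rw [List.getElem?_eq_none (by simp; omega), List.getElem?_eq_none (by simp; omega)]
  · intro n
    have : T.iterW σ ((List.range n).map fun j => W (w'.length + 1 + j)) = (List.range n).map W ∧
        T.iterOuts σ ((List.range n).map fun j => W (w'.length + 1 + j)) = (c n).2 := by
      induction n with
      | zero => simp [iterW_nil, iterOuts_nil, c]
      | succ n ih =>
        obtain ⟨h1, h2⟩ := ih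
        rw [List.range_succ, List.map_append, List.map_append, List.map_singleton,
          List.map_singleton, iterW_append_word, iterOuts_append_word, h1, h2, hlast, hpre, hcol]
        exact ⟨rfl, rfl⟩
    exact this.1
  · have hfin : (Set.range c).Finite := by
      refine Set.Finite.subset ((Set.finite_univ.prod (List.finite_length_eq X w'.length)).prod
        (List.finite_length_eq Q σ.length)) ?_
      rintro _ ⟨i, rfl⟩
      refine ⟨⟨trivial, by simpa [buf] using hlen i⟩, ?_⟩
      induction i with
      | zero => simp [c]
      | succ i ih =>
        simp only [Set.mem_ofPred_eq] at ih ⊢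
        rw [hcol, length_iterOuts, ih]
    obtain ⟨i, -, j, -, hij, he⟩ := Set.infinite_univ.exists_lt_map_eq_of_mapsTo
      (f := c) (fun x _ => Set.mem_range_self x) hfin
    refine ⟨i, j - i, by omega, fun n hn => ?_⟩
    obtain ⟨d, rfl⟩ := Nat.exists_eq_add_of_le hn
    have hd : c (j + d) = c (i + d) := by
      simp only [c] at he ⊢
      rw [add_comm j, add_comm i, Function.iterate_add_apply, Function.iterate_add_apply, he]
    rw [show i + d + (j - i) = j + d by omega]
    simp only [W, hd]

/-! ### Space-time diagrams of `zmap` -/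

/-- The `m` letters of `z` from position `i` on. -/
def win (z : ℤ → X) (i : ℤ) (m : ℕ) : List X :=
  (List.range m).map fun j : ℕ => z (i + (j : ℤ))

/-- The state forced by a bi-infinite sequence at position `i`. -/
def stAt (T : Transducer X Q) (k : ℕ) (q0 : Q) (z : ℤ → X) (i : ℤ) : Q :=
  T.stepW (win z (i - k) k) q0

theorem zmap_apply (T : Transducer X Q) (k : ℕ) (q0 : Q) (z : ℤ → X) (i : ℤ) :
    T.zmap k q0 z i = T.out (z i) (T.stAt k q0 z i) := by
  -- In `zmap` the index `j` is an integer, so that `List.range k` is coerced to a `List ℤ`.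
  simp [zmap, stAt, win, List.map_eq_flatMap, List.flatMap_assoc]

theorem length_win (z : ℤ → X) (i : ℤ) (m : ℕ) : (win z i m).length = m := by simp [win]

theorem win_succ (z : ℤ → X) (i : ℤ) (m : ℕ) : win z i (m + 1) = win z i m ++ [z (i + m)] := by
  simp [win, List.range_succ]

theorem win_succ' (z : ℤ → X) (i : ℤ) (m : ℕ) : win z i (m + 1) = z i :: win z (i + 1) m := by
  simp only [win, List.range_succ_eq_map, List.map_cons, List.map_map]
  congr 1
  · simp
  · apply List.map_congr_left
    intro j _
    simp only [Function.comp, Nat.succ_eq_add_one]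
    congr 1
    push_cast
    ring

section

variable {T : Transducer X Q} {k : ℕ} {q0 : Q}

theorem stAt_succ (hsync : T.Synchronizing k) (z : ℤ → X) (i : ℤ) :
    T.stAt k q0 z (i + 1) = T.step (z i) (T.stAt k q0 z i) := by
  have e : T.step (z i) (T.stAt k q0 z i) = T.stepW (win z (i - k) (k + 1)) q0 := by
    rw [win_succ, stepW_append]
    simp [stepW, stAt]
  rw [e, win_succ']
  simp only [stepW]
  rw [show i - (k : ℤ) + 1 = i + 1 - k by ring]
  exact hsync _ (length_win _ _ _) _ _

theorem stAt_add (hsync : T.Synchronizing k) (z : ℤ → X) (i : ℤ) (m : ℕ) :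
    T.stAt k q0 z (i + m) = T.stepW (win z i m) (T.stAt k q0 z i) := by
  induction m with
  | zero => simp [win, stepW]
  | succ m ih =>
    rw [win_succ, stepW_append, ← ih]
    push_cast
    rw [← add_assoc, stAt_succ hsync]
    rfl

theorem win_zmap (hsync : T.Synchronizing k) (z : ℤ → X) (i : ℤ) (m : ℕ) :
    win (T.zmap k q0 z) i m = T.outW (win z i m) (T.stAt k q0 z i) := by
  induction m with
  | zero => simp [win, outW]
  | succ m ih =>
    rw [win_succ, win_succ, outW_append, ← ih, ← stAt_add hsync, zmap_apply]
    rfl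

/-- The states at position `i` at the times before `l`. -/
def column (T : Transducer X Q) (k : ℕ) (q0 : Q) : ℕ → (ℤ → X) → ℤ → List Q
  | 0, _, _ => []
  | l + 1, z, i => T.stAt k q0 z i :: column T k q0 l (T.zmap k q0 z) i

theorem length_column (l : ℕ) (z : ℤ → X) (i : ℤ) :
    (column T k q0 l z i).length = l := by
  induction l generalizing z with
  | zero => rfl
  | succ l ih => simp [column, ih]

theorem win_iterate (hsync : T.Synchronizing k) (l : ℕ) (z : ℤ → X) (i : ℤ) (m : ℕ) :
    win ((T.zmap k q0)^[l] z) i m = T.iterW (column T k q0 l z i) (win z i m) := by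
  induction l generalizing z with
  | zero => rfl
  | succ l ih =>
    rw [Function.iterate_succ_apply, ih, win_zmap hsync]
    rfl

theorem column_add (hsync : T.Synchronizing k) (l : ℕ) (z : ℤ → X) (i : ℤ) (m : ℕ) :
    column T k q0 l z (i + m) = T.iterOuts (column T k q0 l z i) (win z i m) := by
  induction l generalizing z with
  | zero => rfl
  | succ l ih => rw [column, column, iterOuts, ih, stAt_add hsync, win_zmap hsync]

/-- The property which the tile `(w, σ)` transports: `z` has state `t` at position `i` and reads
`W` from there on. -/
def Good (T : Transducer X Q) (k : ℕ) (q0 : Q) (W : ℕ → X) (t : Q) (z : ℤ → X) (i : ℤ) : Prop :=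
  T.stAt k q0 z i = t ∧ ∀ m, win z i m = (List.range m).map W

theorem Good.step (hsync : T.Synchronizing k) {w : List X} {σ : List Q} {t : Q}
    (hw : k ≤ w.length) (hσ : σ ≠ []) (h : T.HalfTile q0 w σ t t) {W : ℕ → X}
    (hW : (List.range w.length).map W = w)
    (hW' : ∀ n, T.iterW σ ((List.range n).map fun j => W (w.length + j)) = (List.range n).map W)
    {z : ℤ → X} {i : ℤ} (hz : Good T k q0 W t z i) :
    Good T k q0 W t ((T.zmap k q0)^[σ.length] z) (i + w.length) := by
  obtain ⟨hst, hwin⟩ := hz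
  obtain ⟨l, hl⟩ : ∃ l, σ.length = l + 1 :=
    ⟨σ.length - 1, by have := List.length_pos_iff.2 hσ; omega⟩
  have hcol : column T k q0 σ.length z i = t :: column T k q0 l (T.zmap k q0 z) i := by
    rw [hl, column, hst]
  have hww : win z i w.length = w := by rw [hwin, hW]
  obtain ⟨h1, h2⟩ := h (column T k q0 l (T.zmap k q0 z) i) (by rw [length_column, hl])
  refine ⟨?_, fun m => ?_⟩
  · rw [stAt_add hsync, win_iterate hsync, hcol, hww]
    refine (hsync.stepW_eq _ ?_ _ _).trans h2
    rw [length_iterW]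
    exact hw
  · rw [win_iterate hsync, column_add hsync, hcol, hww, h1, ← hW']
    congr 1
    have hadd : win z i (w.length + m) = win z i w.length ++ win z (i + w.length) m := by
      simp [win, List.range_add, Function.comp_def, add_assoc]
    have h3 := hwin (w.length + m)
    rw [hadd, hwin w.length, List.range_add, List.map_append, List.append_cancel_left_eq,
      List.map_map] at h3
    exact h3

/-- A finite orbit makes the run along `W` purely periodic. -/
theorem run_periodic (hsync : T.Synchronizing k) {w : List X} {σ : List Q} {t : Q}
    (hw : k ≤ w.length) (hw0 : w ≠ []) (hσ : σ ≠ []) (h : T.HalfTile q0 w σ t t) {W : ℕ → X}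
    (hW : (List.range w.length).map W = w)
    (hW' : ∀ n, T.iterW σ ((List.range n).map fun j => W (w.length + j)) = (List.range n).map W)
    {z : ℤ → X} (hz : Good T k q0 W t z 0)
    (hfin : (Set.range fun m : ℕ => (T.zmap k q0)^[m] z).Finite) :
    ∃ d, 0 < d ∧ Function.Periodic (fun m => T.stepW ((List.range m).map W) t) d := by
  have hgood : ∀ j : ℕ,
      Good T k q0 W t ((T.zmap k q0)^[σ.length * j] z) ((w.length * j : ℕ) : ℤ) := by
    intro j
    induction j with
    | zero => simpa using hz
    | succ j ih =>
      have := ih.step hsync hw hσ h hW hW'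
      rw [← Function.iterate_add_apply] at this
      convert this using 1
      · congr 1; ring_nf
      · push_cast; ring
  have hrun : ∀ j m : ℕ, T.stAt k q0 ((T.zmap k q0)^[σ.length * j] z)
      ((w.length * j + m : ℕ) : ℤ) = T.stepW ((List.range m).map W) t := by
    intro j m
    rw [Nat.cast_add, stAt_add hsync, (hgood j).1, (hgood j).2]
  obtain ⟨a, -, b, -, hab, he⟩ := Set.infinite_univ.exists_lt_map_eq_of_mapsTo
    (f := fun j : ℕ => (T.zmap k q0)^[σ.length * j] z)
    (fun j _ => Set.mem_range_self (σ.length * j)) hfin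
  obtain ⟨e, rfl⟩ := Nat.exists_eq_add_of_lt hab
  refine ⟨w.length * (e + 1), Nat.mul_pos (List.length_pos_iff.2 hw0) (by omega), fun m => ?_⟩
  simp only at he ⊢
  rw [← hrun a, ← hrun (a + e + 1), he]
  congr 2
  ring

end

/-- Every right half which is eventually periodic extends to a rational sequence with a prescribed
state at position `0`: put a word forcing this state in front and continue to the left by its
first letter. -/
theorem exists_rational_good {T : Transducer X Q} {k : ℕ} (q0 : Q) (hsync : T.Synchronizing k)
    {t : Q} (ht : T.InCore t) {W : ℕ → X} {N P : ℕ} (hP : 0 < P)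
    (hW : ∀ n, N ≤ n → W (n + P) = W n) :
    ∃ z : ℤ → X, IsRational z ∧ Good T k q0 W t z 0 := by
  obtain ⟨Γ, hΓ, hforce⟩ := ht
  have hl := List.length_pos_iff.2 hΓ
  let z : ℤ → X := fun i =>
    if 0 ≤ i then W i.toNat else Γ.getD (i + Γ.length).toNat (W 0)
  have hpos : ∀ m : ℕ, z m = W m := by intro m; simp [z]
  have hneg : win z (-(Γ.length : ℤ)) Γ.length = Γ := by
    apply List.ext_getElem (length_win _ _ _)
    intro j h1 h2
    have : ¬ (0 : ℤ) ≤ -(Γ.length : ℤ) + j := by omega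
    simp [win, z, h2, h2.not_ge]
  refine ⟨z, ⟨max N Γ.length, P, 1, hP, one_pos, fun i hi => ?_, fun i hi => ?_⟩, ?_, fun m => ?_⟩
  · obtain ⟨m, rfl⟩ := Int.eq_ofNat_of_zero_le (by omega : 0 ≤ i)
    have := hpos (m + P)
    push_cast at this
    rw [this, hpos, hW m (by omega)]
  · have h1 : ¬ (0 : ℤ) ≤ i := by omega
    have h2 : ¬ (0 : ℤ) ≤ i - (1 : ℕ) := by omega
    simp only [z, if_neg h1, if_neg h2]
    congr 1
    omega
  · have := stAt_add (q0 := q0) hsync z (-(Γ.length : ℤ)) Γ.length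
    rwa [hneg, hforce, neg_add_cancel] at this
  · simp [win, hpos]

end Transducer

/-- Let `A` be a core synchronous transducer on `X_n`, synchronizing at
level `k`, invertible, with every state a homeomorphism state, and let `r ≥ k`.  If the
graph of bad pairs `G_r(A)` contains a circuit, then there exists a rational element
`z ∈ X_n^ℤ` whose forward orbit under `f_A` is infinite. -/
theorem badPairs_circuit_implies_infinite_orbit
    (n : ℕ) (hn : 2 ≤ n) {Q : Type*} [Fintype Q]
    (A : Transducer (Fin n) Q) (k r : ℕ) (q0 : Q)
    (hcore : A.IsCore) (hsync : A.Synchronizing k)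
    (hinv : A.Invertible) (hhomeo : A.AllHomeo)
    (hkr : k ≤ r)
    (hcirc : ∃ v : Set Q, Relation.TransGen (A.BadEdge q0 r) v v) :
    ∃ z : ℤ → Fin n, Transducer.IsRational z ∧
      (Set.range fun m : ℕ => (A.zmap k q0)^[m] z).Infinite := by
  obtain ⟨v, hv⟩ := hcirc
  obtain ⟨⟨t, p⟩, hne, w, σ, hw, hσ, ht, hp⟩ :=
    Transducer.exists_closed_tile hkr hsync hinv hv
  -- The empty word synchronizes only a transducer with one state.
  have hw0 : w ≠ [] := by
    rintro rfl
    exact hne (hsync [] (Nat.le_zero.1 hw).symm t p)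
  obtain ⟨W, hW, hW', N, P, hP, hper⟩ := A.exists_selfsimilar hinv w σ hw0
  obtain ⟨z, hz, hzg⟩ := Transducer.exists_rational_good q0 hsync (hcore t) hP hper
  obtain ⟨y, hy, hyg⟩ := Transducer.exists_rational_good q0 hsync (hcore p) hP hper
  by_contra! hall
  obtain ⟨d, hd, hdt⟩ := Transducer.run_periodic hsync hw hw0 hσ ht hW hW' hzg
    (hall z hz)
  obtain ⟨d', hd', hdp⟩ := Transducer.run_periodic hsync hw hw0 hσ hp hW hW' hyg
    (hall y hy)
  -- `k * d * d'` is a common period of both runs; the extra factor makes it at least `k`.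
  have h1 := hdt.nat_mul_eq (k * d')
  have h2 := hdp.nat_mul_eq (k * d)
  apply hne
  simp only [Nat.cast_id, List.range_zero, List.map_nil, Transducer.stepW] at h1 h2
  rw [← h1, ← h2, show k * d * d' = k * d' * d by ring]
  apply hsync.stepW_eq
  have : k * 1 ≤ k * (d' * d) := Nat.mul_le_mul_left k (Nat.mul_pos hd' hd)
  simpa [mul_assoc] using this
end

section
/- Let A be a core synchronous transducer on X_n, synchronizing at level k, invertible, with every state a homeomorphism state, and suppose the maps f_A^m (m ≥ 1) are pairwise distinct. Then either there exists j ≥ k such that the graph of bad pairs G_j(A) contains a loop, or there exist states p, q ∈ Q_A such that the assignment w ↦ A_w, from nonempty words w over {p, q} to self-maps of X_n^ℕ, is injective (so the automaton semigroup generated by A contains a free subsemigroup of rank 2). -/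
namespace Transducer

variable {X Q : Type*}

/-! ### Sequences: synchronization, self-similarity and causality -/

theorem stateMap_add (A : Transducer X Q) (q : Q) (y : ℕ → X) (c j : ℕ) :
    A.stateMap q y (c + j) =
      A.stateMap (A.stepW ((List.range c).map y) q) (fun i => y (c + i)) j := by
  simp [stateMap, List.range_add, stepW_append, Function.comp_def]

/-- Reading at least `k` letters forgets both the starting state and all letters but the last
`k`. -/
theorem stateMap_of_le (A : Transducer X Q) {k : ℕ} (hsync : A.Synchronizing k) (q q' : Q)
    (y : ℕ → X) (j : ℕ) :
    A.stateMap q y (j + k) =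
      A.out (y (j + k)) (A.stepW ((List.range k).map fun i => y (j + i)) q') := by
  rw [stateMap_add]
  unfold stateMap
  rw [hsync _ (by simp) _ q']

/-- Two inputs that agree from position `d` on give outputs that agree from position `d + k` on,
whatever the states. -/
theorem stateMap_tail (A : Transducer X Q) {k : ℕ} (hsync : A.Synchronizing k) (p q : Q)
    {d : ℕ} {y z : ℕ → X} (h : ∀ i, d ≤ i → y i = z i) (i : ℕ) (hi : d + k ≤ i) :
    A.stateMap p y i = A.stateMap q z i := by
  obtain ⟨j, rfl⟩ : ∃ j, i = j + k := ⟨i - k, by omega⟩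
  rw [stateMap_of_le A hsync p p, stateMap_of_le A hsync q p, h (j + k) (by omega)]
  congr 2
  exact List.map_congr_left fun a _ => h _ (by omega)

/-- Self-similarity of the maps represented by words. -/
theorem wordMap_add (A : Transducer X Q) (w : List Q) (y : ℕ → X) (c : ℕ) :
    ∃ w' : List Q, w'.length = w.length ∧
      ∀ j, A.wordMap w y (c + j) = A.wordMap w' (fun i => y (c + i)) j := by
  induction w generalizing y with
  | nil => exact ⟨[], rfl, fun j => rfl⟩
  | cons q w ih =>
    obtain ⟨w', hl, h⟩ := ih (A.stateMap q y)
    refine ⟨A.stepW ((List.range c).map y) q :: w', by simp [hl], fun j => ?_⟩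
    simp only [wordMap]
    rw [h j]
    congr 1
    funext i
    exact stateMap_add A q y c i

theorem wordMap_causal (A : Transducer X Q) (w : List Q) {y z : ℕ → X} (d : ℕ)
    (h : ∀ i, i ≤ d → y i = z i) (i : ℕ) (hi : i ≤ d) : A.wordMap w y i = A.wordMap w z i := by
  induction w generalizing y z with
  | nil => exact h i hi
  | cons q w ih =>
    refine ih fun j hj => ?_
    unfold stateMap
    rw [h j hj]
    congr 2
    exact List.map_congr_left fun a ha => h _ (by have := List.mem_range.1 ha; omega)

/-- In the definition of `zmap`, the list of offsets is coerced to `List ℤ` as a whole; here the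
offsets are cast one at a time. -/
theorem zmap_apply_s2 (A : Transducer X Q) (k : ℕ) (q0 : Q) (z : ℤ → X) (i : ℤ) :
    A.zmap k q0 z i =
      A.out (z i) (A.stepW ((List.range k).map fun j : ℕ => z (i - (k : ℤ) + (j : ℤ))) q0) := by
  simp [zmap, List.map_eq_flatMap, List.flatMap_assoc]

/-- Far enough to the right, the map represented by a word of length `m` computes the `m`-th
iterate of the map on bi-infinite sequences. -/
theorem wordMap_eq_zmap (A : Transducer X Q) {k : ℕ} (hsync : A.Synchronizing k) (q0 : Q)
    (b : ℤ) (w : List Q) (y : ℕ → X) (z : ℤ → X) (c : ℕ) (h : ∀ j, c ≤ j → y j = z (b + j))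
    (j : ℕ) (hj : c + w.length * k ≤ j) :
    A.wordMap w y j = (A.zmap k q0)^[w.length] z (b + j) := by
  induction w generalizing y z c with
  | nil => exact h j (by simpa using hj)
  | cons q w ih =>
    simp only [wordMap, List.length_cons, Function.iterate_succ, Function.comp_apply]
    refine ih _ _ (c + k) (fun i hi => ?_) (by
      simp only [List.length_cons, Nat.succ_mul] at hj; omega)
    obtain ⟨i, rfl⟩ : ∃ a, i = a + k := ⟨i - k, by omega⟩
    rw [stateMap_of_le A hsync q q0]
    rw [zmap_apply_s2, h (i + k) (by omega)]
    congr 2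
    refine List.map_congr_left fun a _ => ?_
    rw [h _ (by omega)]
    congr 1
    push_cast
    ring

/-- Words of different lengths represent different maps when the powers of `f_A` are distinct. -/
theorem length_eq_of_wordMap_eq (A : Transducer X Q) {k : ℕ} (hsync : A.Synchronizing k)
    (q0 : Q)
    (hdist : ∀ m m' : ℕ, 1 ≤ m → 1 ≤ m' → m ≠ m' →
      (A.zmap k q0)^[m] ≠ (A.zmap k q0)^[m'])
    {w w' : List Q} (hw : w ≠ []) (hw' : w' ≠ []) (h : A.wordMap w = A.wordMap w') :
    w.length = w'.length := by
  by_contra hne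
  refine hdist _ _ (List.length_pos_iff.2 hw) (List.length_pos_iff.2 hw') hne ?_
  funext z i
  -- Both words are run on `z` from a position far enough to the left of `i`.
  set K := w.length * k + w'.length * k with hK
  have e : i = (i - K) + (K : ℤ) := by ring
  have h1 := wordMap_eq_zmap A hsync q0 (i - K) w (fun j => z (i - K + j)) z 0
    (fun _ _ => rfl) K (by omega)
  have h2 := wordMap_eq_zmap A hsync q0 (i - K) w' (fun j => z (i - K + j)) z 0
    (fun _ _ => rfl) K (by omega)
  rw [e, ← h1, ← h2, h]

/-- If, from position `d` on, the output of a word of states depends only on its length, then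
each iterate of `f_A` is a sliding block code with a window of `d + 1` letters. -/
theorem zmap_iterate_eq (A : Transducer X Q) {k : ℕ} (hsync : A.Synchronizing k) (q0 : Q)
    {d : ℕ}
    (hd : ∀ w w' : List Q, w.length = w'.length → ∀ x i, d ≤ i →
      A.wordMap w x i = A.wordMap w' x i) (m : ℕ) (z : ℤ → X) (i : ℤ) :
    (A.zmap k q0)^[m] z i =
      A.wordMap (List.replicate m q0) (fun j => z (i - d + (min j d : ℕ))) d := by
  set c := m * k with hc
  have e : i = (i - d - c) + ((c + d : ℕ) : ℤ) := by push_cast; ring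
  have h1 := wordMap_eq_zmap A hsync q0 (i - d - c) (List.replicate m q0)
    (fun j => z (i - d - c + j)) z 0 (fun _ _ => rfl) (c + d) (by simp [hc])
  rw [List.length_replicate, ← e] at h1
  rw [← h1]
  obtain ⟨w', hl, h2⟩ := wordMap_add A (List.replicate m q0) (fun j => z (i - d - c + j)) c
  rw [h2 d, hd w' _ hl _ d le_rfl]
  refine wordMap_causal A _ d (fun j hj => ?_) d le_rfl
  rw [min_eq_left hj]
  congr 1
  push_cast
  ring

/-! ### Permutations fixing all letters beyond a given position -/

/-- The group of permutations of `X^ℕ` that change no letter at a position `≥ d`. -/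
def tailFix (X : Type*) (d : ℕ) : Subgroup (Equiv.Perm (ℕ → X)) where
  carrier := {g | ∀ x i, d ≤ i → g x i = x i}
  one_mem' := fun _ _ _ => rfl
  mul_mem' := fun {a b} ha hb x i hi => by
    rw [Equiv.Perm.mul_apply, ha _ i hi, hb _ i hi]
  inv_mem' := fun {a} ha x i hi => by
    have := ha (a⁻¹ x) i hi
    rw [Equiv.Perm.coe_inv, Equiv.apply_symm_apply] at this
    exact this.symm

theorem mem_tailFix {d : ℕ} {g : Equiv.Perm (ℕ → X)} :
    g ∈ tailFix X d ↔ ∀ x i, d ≤ i → g x i = x i := Iff.rfl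

theorem tailFix_mono {d e : ℕ} (h : d ≤ e) : tailFix X d ≤ tailFix X e :=
  fun _ hg x i hi => hg x i (h.trans hi)

/-- The map induced by a state, as a permutation. -/
noncomputable def statePerm (A : Transducer X Q) (hh : A.AllHomeo) (q : Q) :
    Equiv.Perm (ℕ → X) :=
  Equiv.ofBijective (A.stateMap q) (hh q)

/-- The map represented by a word of states, as a permutation. -/
noncomputable def wordPerm (A : Transducer X Q) (hh : A.AllHomeo) :
    List Q → Equiv.Perm (ℕ → X)
  | [] => 1
  | q :: w => wordPerm A hh w * A.statePerm hh q

theorem statePerm_apply (A : Transducer X Q) (hh : A.AllHomeo) (q : Q) (x : ℕ → X) :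
    A.statePerm hh q x = A.stateMap q x := rfl

theorem wordPerm_apply (A : Transducer X Q) (hh : A.AllHomeo) (w : List Q) (x : ℕ → X) :
    A.wordPerm hh w x = A.wordMap w x := by
  induction w generalizing x with
  | nil => rfl
  | cons q w ih => exact ih _

theorem statePerm_div_mem (A : Transducer X Q) (hh : A.AllHomeo) {k : ℕ}
    (hsync : A.Synchronizing k) (p q : Q) :
    A.statePerm hh p * (A.statePerm hh q)⁻¹ ∈ tailFix X k := by
  intro x i hi
  obtain ⟨y, rfl⟩ := (A.statePerm hh q).surjective x
  rw [Equiv.Perm.mul_apply, Equiv.Perm.coe_inv, Equiv.symm_apply_apply]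
  exact stateMap_tail A hsync p q (d := 0) (fun _ _ => rfl) i (by omega)

theorem conj_mem_tailFix (A : Transducer X Q) (hh : A.AllHomeo) {k : ℕ}
    (hsync : A.Synchronizing k) (q : Q) {d : ℕ} {g : Equiv.Perm (ℕ → X)}
    (hg : g ∈ tailFix X d) :
    A.statePerm hh q * g * (A.statePerm hh q)⁻¹ ∈ tailFix X (d + k) := by
  intro x i hi
  obtain ⟨y, rfl⟩ := (A.statePerm hh q).surjective x
  rw [Equiv.Perm.mul_apply, Equiv.Perm.coe_inv, Equiv.symm_apply_apply, Equiv.Perm.mul_apply]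
  exact stateMap_tail A hsync q q (fun j hj => hg y j hj) i hi

theorem pow_conj_mem_tailFix (A : Transducer X Q) (hh : A.AllHomeo) {k : ℕ}
    (hsync : A.Synchronizing k) (q : Q) {d : ℕ} {g : Equiv.Perm (ℕ → X)}
    (hg : g ∈ tailFix X d) (i : ℕ) :
    A.statePerm hh q ^ i * g * (A.statePerm hh q ^ i)⁻¹ ∈ tailFix X (d + i * k) := by
  induction i with
  | zero => simpa using hg
  | succ i ih =>
    have := conj_mem_tailFix A hh hsync q ih
    rw [show d + i * k + k = d + (i + 1) * k by ring] at this
    convert this using 1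
    rw [pow_succ']
    group

/-! ### Conjugates by powers of one element -/

/-- `conjSpan t f m` is generated by the conjugates `t ^ i * f * t ^ (-i)` with `i < m`. -/
def conjSpan {G : Type*} [Group G] (t f : G) (m : ℕ) : Subgroup G :=
  Subgroup.closure {g | ∃ i < m, g = t ^ i * f * (t ^ i)⁻¹}

theorem conjSpan_mono {G : Type*} [Group G] (t f : G) {m m' : ℕ} (h : m ≤ m') :
    conjSpan t f m ≤ conjSpan t f m' :=
  Subgroup.closure_mono fun _ ⟨i, hi, e⟩ => ⟨i, hi.trans_le h, e⟩

/-- Once a conjugate lies in the span of the earlier ones, so do all later conjugates. -/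
theorem conj_mem_conjSpan {G : Type*} [Group G] {t f : G} {m : ℕ}
    (h : t ^ m * f * (t ^ m)⁻¹ ∈ conjSpan t f m) (i : ℕ) :
    t ^ i * f * (t ^ i)⁻¹ ∈ conjSpan t f m := by
  have hstab : conjSpan t f m ≤ (conjSpan t f m).comap (MulAut.conj t).toMonoidHom := by
    refine (Subgroup.closure_le _).2 ?_
    rintro _ ⟨j, hj, rfl⟩
    have e : (MulAut.conj t) (t ^ j * f * (t ^ j)⁻¹) = t ^ (j + 1) * f * (t ^ (j + 1))⁻¹ := by
      rw [MulAut.conj_apply, pow_succ']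
      group
    change (MulAut.conj t) _ ∈ conjSpan t f m
    rw [e]
    rcases Nat.lt_or_ge (j + 1) m with h1 | h1
    · exact Subgroup.subset_closure ⟨j + 1, h1, rfl⟩
    · obtain rfl : m = j + 1 := by omega
      exact h
  induction i with
  | zero =>
    rcases Nat.eq_zero_or_pos m with rfl | hm
    · exact h
    · exact Subgroup.subset_closure ⟨0, hm, rfl⟩
  | succ i ih =>
    have := hstab ih
    change (MulAut.conj t) _ ∈ conjSpan t f m at this
    rw [MulAut.conj_apply] at this
    convert this using 1
    rw [pow_succ']
    group

/-- A normal form for words: `A_w` is an element of the span of conjugates times a power of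
`t`. -/
theorem wordPerm_mul_mem (A : Transducer X Q) (hh : A.AllHomeo) (t p : Q) (w : List Q)
    (hw : ∀ a ∈ w, a = t ∨ a = p) :
    A.wordPerm hh w * (A.statePerm hh t ^ w.length)⁻¹ ∈
      conjSpan (A.statePerm hh t) (A.statePerm hh p * (A.statePerm hh t)⁻¹) w.length := by
  induction w with
  | nil => simp [wordPerm, one_mem]
  | cons a w ih =>
    have ih' := conjSpan_mono _ _ (Nat.le_succ w.length)
      (ih fun b hb => hw b (List.mem_cons_of_mem _ hb))
    simp only [wordPerm, List.length_cons]
    rcases hw a List.mem_cons_self with rfl | rfl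
    · convert ih' using 1
      rw [pow_succ]
      group
    · convert mul_mem ih' (Subgroup.subset_closure ⟨w.length, Nat.lt_succ_self _, rfl⟩) using 1
      rw [pow_succ]
      group

/-- A nontrivial relation between words of equal length over two states `t` and `p` puts some
conjugate of `A_p A_t⁻¹` into the span of the earlier ones. -/
theorem conj_mem_of_relation (A : Transducer X Q) (hh : A.AllHomeo) (t p : Q) (w w' : List Q)
    (hw : ∀ a ∈ w, a = t ∨ a = p) (hw' : ∀ a ∈ w', a = t ∨ a = p)
    (hl : w.length = w'.length) (hne : w ≠ w') (h : A.wordPerm hh w = A.wordPerm hh w') :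
    ∃ m : ℕ, A.statePerm hh t ^ m * (A.statePerm hh p * (A.statePerm hh t)⁻¹) *
        (A.statePerm hh t ^ m)⁻¹ ∈
      conjSpan (A.statePerm hh t) (A.statePerm hh p * (A.statePerm hh t)⁻¹) m := by
  -- The case where the first letters differ, stated once for use in both orders.
  have key : ∀ u u' : List Q, (∀ a ∈ u, a = t ∨ a = p) → (∀ a ∈ u', a = t ∨ a = p) →
      u.length = u'.length →
      A.wordPerm hh u * A.statePerm hh t = A.wordPerm hh u' * A.statePerm hh p →
      A.statePerm hh t ^ u.length * (A.statePerm hh p * (A.statePerm hh t)⁻¹) *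
        (A.statePerm hh t ^ u.length)⁻¹ ∈
      conjSpan (A.statePerm hh t) (A.statePerm hh p * (A.statePerm hh t)⁻¹) u.length := by
    intro u u' hu hu' hl h
    have h1 := wordPerm_mul_mem A hh t p u hu
    have h2 := wordPerm_mul_mem A hh t p u' hu'
    rw [← hl] at h2
    convert mul_mem (inv_mem h2) h1 using 1
    rw [eq_mul_inv_of_mul_eq h]
    group
  induction w generalizing w' with
  | nil => exact absurd (List.length_eq_zero_iff.1 hl.symm).symm hne
  | cons a u ih =>
    obtain _ | ⟨b, u'⟩ := w'
    · simp at hl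
    have hu : ∀ c ∈ u, c = t ∨ c = p := fun c hc => hw c (List.mem_cons_of_mem _ hc)
    have hu' : ∀ c ∈ u', c = t ∨ c = p := fun c hc => hw' c (List.mem_cons_of_mem _ hc)
    have hl' : u.length = u'.length := by simpa using hl
    simp only [wordPerm] at h
    by_cases hab : a = b
    · subst hab
      exact ih u' hu hu' hl' (fun e => hne (by rw [e])) (mul_right_cancel h)
    · rcases hw a List.mem_cons_self with rfl | rfl <;>
        rcases hw' b List.mem_cons_self with rfl | rfl
      · exact absurd rfl hab
      · exact ⟨_, key u u' hu hu' hl' h⟩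
      · exact ⟨_, key u' u hu' hu hl'.symm h.symm⟩
      · exact absurd rfl hab

/-- If the chain of spans of conjugates of `A_p A_t⁻¹` stabilizes, all these conjugates lie in a
single `tailFix X D`. -/
theorem exists_tailFix_of_conj_mem (A : Transducer X Q) (hh : A.AllHomeo) {k : ℕ}
    (hsync : A.Synchronizing k) (t p : Q) {m : ℕ}
    (h : A.statePerm hh t ^ m * (A.statePerm hh p * (A.statePerm hh t)⁻¹) *
        (A.statePerm hh t ^ m)⁻¹ ∈
      conjSpan (A.statePerm hh t) (A.statePerm hh p * (A.statePerm hh t)⁻¹) m) :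
    ∃ D : ℕ, ∀ i : ℕ, A.statePerm hh t ^ i * (A.statePerm hh p * (A.statePerm hh t)⁻¹) *
        (A.statePerm hh t ^ i)⁻¹ ∈ tailFix X D := by
  refine ⟨k + m * k, fun i => ?_⟩
  refine (Subgroup.closure_le _).2 ?_ (conj_mem_conjSpan h i)
  rintro _ ⟨j, hj, rfl⟩
  exact tailFix_mono (Nat.add_le_add_left (Nat.mul_le_mul_right k hj.le) k)
    (pow_conj_mem_tailFix A hh hsync t (statePerm_div_mem A hh hsync p t) j)

theorem wordPerm_mul_mem_tailFix (A : Transducer X Q) (hh : A.AllHomeo) (t : Q) {D : ℕ}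
    (hD : ∀ (p : Q) (i : ℕ),
      A.statePerm hh t ^ i * (A.statePerm hh p * (A.statePerm hh t)⁻¹) *
        (A.statePerm hh t ^ i)⁻¹ ∈ tailFix X D) (w : List Q) :
    A.wordPerm hh w * (A.statePerm hh t ^ w.length)⁻¹ ∈ tailFix X D := by
  induction w with
  | nil => simp [wordPerm, one_mem]
  | cons a w ih =>
    simp only [wordPerm, List.length_cons]
    convert mul_mem ih (hD a w.length) using 1
    rw [pow_succ]
    group

end Transducer


/-- Let `A` be a core synchronous transducer on `X_n`, synchronizing at
level `k`, invertible, with every state a homeomorphism state, and suppose the maps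
`f_A^m` (`m ≥ 1`) are pairwise distinct.  Then either some graph of bad pairs `G_j(A)`
(`j ≥ k`) contains a loop, or there exist states `p ≠ q` such that `w ↦ A_w` is
injective on nonempty words over `{p, q}` (a free subsemigroup of rank 2). -/
theorem loop_or_free_subsemigroup
    (n : ℕ) (hn : 2 ≤ n) {Q : Type*} [Fintype Q]
    (A : Transducer (Fin n) Q) (k : ℕ) (q0 : Q)
    (hcore : A.IsCore) (hsync : A.Synchronizing k)
    (hinv : A.Invertible) (hhomeo : A.AllHomeo)
    (hdist : ∀ m m' : ℕ, 1 ≤ m → 1 ≤ m' → m ≠ m' →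
      (A.zmap k q0)^[m] ≠ (A.zmap k q0)^[m']) :
    (∃ j : ℕ, k ≤ j ∧ ∃ v : Set Q, A.BadEdge q0 j v v) ∨
      ∃ p q : Q, p ≠ q ∧
        ∀ w w' : List Q, w ≠ [] → w' ≠ [] →
          (∀ a ∈ w, a = p ∨ a = q) → (∀ a ∈ w', a = p ∨ a = q) →
          A.wordMap w = A.wordMap w' → w = w' := by
  refine Or.inr ?_
  by_contra hcon
  push Not at hcon
  have hbound : ∀ p : Q, ∃ D : ℕ, ∀ i : ℕ, A.statePerm hhomeo q0 ^ i *
      (A.statePerm hhomeo p * (A.statePerm hhomeo q0)⁻¹) * (A.statePerm hhomeo q0 ^ i)⁻¹ ∈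
        Transducer.tailFix (Fin n) D := by
    intro p
    by_cases hp : q0 = p
    · subst hp
      exact ⟨0, fun i => by simp [one_mem]⟩
    · obtain ⟨w, w', hw, hw', ha, ha', heq, hne⟩ := hcon q0 p hp
      have hl := A.length_eq_of_wordMap_eq hsync q0 hdist hw hw' heq
      have hperm : A.wordPerm hhomeo w = A.wordPerm hhomeo w' := by
        ext1 x
        rw [A.wordPerm_apply, A.wordPerm_apply, heq]
      obtain ⟨m, hm⟩ := A.conj_mem_of_relation hhomeo q0 p w w' ha ha' hl hne hperm
      exact A.exists_tailFix_of_conj_mem hhomeo hsync q0 p hm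
  choose D hD using hbound
  set d := Finset.univ.sup D with hd
  have hall := A.wordPerm_mul_mem_tailFix hhomeo q0 (D := d) fun p i =>
    Transducer.tailFix_mono (Finset.le_sup (Finset.mem_univ p)) (hD p i)
  have htail : ∀ w w' : List Q, w.length = w'.length → ∀ x i, d ≤ i →
      A.wordMap w x i = A.wordMap w' x i := by
    have h0 : ∀ (w : List Q) x i, d ≤ i →
        A.wordMap w x i = (A.statePerm hhomeo q0 ^ w.length) x i := by
      intro w x i hi
      have := hall w ((A.statePerm hhomeo q0 ^ w.length) x) i hi
      rwa [Equiv.Perm.mul_apply, Equiv.Perm.coe_inv, Equiv.symm_apply_apply, A.wordPerm_apply] at this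
    intro w w' hl x i hi
    simp only [h0 _ x i hi, hl]
  -- Pigeonhole on the finitely many block maps with window `d + 1`.
  obtain ⟨m, m', hne, hmm⟩ := Finite.exists_ne_map_eq_of_infinite
    fun (m : ℕ) (v : Fin (d + 1) → Fin n) =>
      A.wordMap (List.replicate (m + 1) q0)
        (fun j => v ⟨min j d, Nat.lt_succ_of_le (min_le_right _ _)⟩) d
  refine hdist (m + 1) (m' + 1) (by omega) (by omega) (by omega) ?_
  funext z i
  rw [A.zmap_iterate_eq hsync q0 htail, A.zmap_iterate_eq hsync q0 htail]
  exact congrFun hmm fun a => z (i - d + (a : ℕ))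
end
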